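/- Let M be a properly infinite σ-finite von Neumann algebra with a faithful normal semifinite trace τ. Let β ∈ M^n (n ≥ 1) be a diagonal n-tuple such that the only finite projection of M belonging to WZ*(β) is 0, and let r ∈ M be a τ-finite projection. Then there exists an isometry v ∈ M (v*v = 1) such that vv* ≤ 1 − r and v* β(j) v = β(j) for every 1 ≤ j ≤ n. -/

import Mathlib

open ContinuousLinearMap Filter Topology

noncomputable section

namespace VNA

variable {H : Type*} [NormedAddCommGroup H] [InnerProductSpace ℂ H] [CompleteSpace H]

/-- A projection (orthogonal projection): idempotent and self-adjoint. -/
def IsProjection (p : H →L[ℂ] H) : Prop := p * p = p ∧ star p = p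

/-- Murray–von Neumann equivalence of `p` and `q` relative to `M`. -/
def MvNE (M : VonNeumannAlgebra H) (p q : H →L[ℂ] H) : Prop :=
  ∃ v ∈ M, star v * v = p ∧ v * star v = q

/-- `p` is a finite projection of `M`; for projections, `q ≤ p` is the range
containment `p * q = q`. -/
def IsFiniteProjection (M : VonNeumannAlgebra H) (p : H →L[ℂ] H) : Prop :=
  p ∈ M ∧ IsProjection p ∧
    ∀ q, q ∈ M → IsProjection q → p * q = q → MvNE M q p → q = p

def IsInfiniteProjection (M : VonNeumannAlgebra H) (p : H →L[ℂ] H) : Prop :=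
  p ∈ M ∧ IsProjection p ∧ ¬ IsFiniteProjection M p

/-- The centre `Z(M) = M ∩ M'` as a set. -/
def centerSet (M : VonNeumannAlgebra H) : Set (H →L[ℂ] H) :=
  {z | z ∈ M ∧ ∀ y ∈ M, z * y = y * z}

def IsCentralProjection (M : VonNeumannAlgebra H) (z : H →L[ℂ] H) : Prop :=
  IsProjection z ∧ z ∈ centerSet M

def IsProperlyInfiniteProjection (M : VonNeumannAlgebra H) (p : H →L[ℂ] H) : Prop :=
  p ∈ M ∧ IsProjection p ∧
    ∀ z, IsCentralProjection M z → z * p ≠ 0 → IsInfiniteProjection M (z * p)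

def ProperlyInfinite (M : VonNeumannAlgebra H) : Prop :=
  IsProperlyInfiniteProjection M 1

/-- `M` is σ-finite: every family of pairwise orthogonal nonzero projections in `M`
is countable. -/
def SigmaFinite (M : VonNeumannAlgebra H) : Prop :=
  ∀ S : Set (H →L[ℂ] H), (∀ p ∈ S, p ∈ M ∧ IsProjection p ∧ p ≠ 0) →
    (∀ p ∈ S, ∀ q ∈ S, p ≠ q → p * q = 0) → S.Countable

/-- A faithful normal semifinite trace on `M`. -/
structure IsFNSTrace (M : VonNeumannAlgebra H) (τ : (H →L[ℂ] H) → ENNReal) : Prop where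
  map_zero : τ 0 = 0
  additive : ∀ x y : H →L[ℂ] H, x ∈ M → y ∈ M → 0 ≤ x → 0 ≤ y → τ (x + y) = τ x + τ y
  homogeneous : ∀ (c : ℝ) (x : H →L[ℂ] H), 0 ≤ c → x ∈ M → 0 ≤ x →
    τ (c • x) = ENNReal.ofReal c * τ x
  tracial : ∀ x : H →L[ℂ] H, x ∈ M → τ (star x * x) = τ (x * star x)
  faithful : ∀ x : H →L[ℂ] H, x ∈ M → 0 ≤ x → τ x = 0 → x = 0
  normal : ∀ (ι : Type*) [Preorder ι] [IsDirected ι (· ≤ ·)] [Nonempty ι]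
      (f : ι → (H →L[ℂ] H)) (x : H →L[ℂ] H),
      (∀ i, f i ∈ M) → (∀ i, 0 ≤ f i) → Monotone f → (∃ C : ℝ, ∀ i, ‖f i‖ ≤ C) →
      x ∈ M → IsLUB (Set.range f) x → τ x = ⨆ i, τ (f i)
  semifinite : ∀ x : H →L[ℂ] H, x ∈ M → 0 ≤ x → x ≠ 0 →
      ∃ y, y ∈ M ∧ 0 ≤ y ∧ y ≤ x ∧ y ≠ 0 ∧ τ y < ⊤

/-- `p` is a `τ`-finite projection of `M`. -/
def IsTauFiniteProjection (M : VonNeumannAlgebra H) (τ : (H →L[ℂ] H) → ENNReal)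
    (p : H →L[ℂ] H) : Prop :=
  p ∈ M ∧ IsProjection p ∧ τ p < ⊤

/-- `F₁⁺(M) = {x ∈ M : 0 ≤ x ≤ 1, px = x for some τ-finite projection p}`. -/
def F1plus (M : VonNeumannAlgebra H) (τ : (H →L[ℂ] H) → ENNReal) : Set (H →L[ℂ] H) :=
  {x | x ∈ M ∧ 0 ≤ x ∧ x ≤ 1 ∧ ∃ p, IsTauFiniteProjection M τ p ∧ p * x = x}

/-- `K(M,τ)`: operator-norm closure of the τ-finitely supported elements of `M`. -/
def Kideal (M : VonNeumannAlgebra H) (τ : (H →L[ℂ] H) → ENNReal) : Set (H →L[ℂ] H) :=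
  closure {x | x ∈ M ∧ ∃ p, IsTauFiniteProjection M τ p ∧ p * x = x}

/-- A commuting self-adjoint `n`-tuple in `M`. -/
def IsCommutingSelfAdjointTuple (M : VonNeumannAlgebra H) {n : ℕ}
    (α : Fin n → (H →L[ℂ] H)) : Prop :=
  (∀ j, α j ∈ M) ∧ (∀ j, star (α j) = α j) ∧ ∀ i j, α i * α j = α j * α i

/-- `‖[r,α]‖ = max_{1≤j≤n} ‖[r, α(j)]‖`. -/
def commNorm {n : ℕ} (α : Fin n → (H →L[ℂ] H)) (r : H →L[ℂ] H) : ℝ :=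
  ⨆ j, ‖r * α j - α j * r‖

/-- `WZ*(S)`: the double commutant in `B(H)` of `S ∪ Z(M)`. -/
def WZstar (M : VonNeumannAlgebra H) (S : Set (H →L[ℂ] H)) : Set (H →L[ℂ] H) :=
  Set.centralizer (Set.centralizer (S ∪ centerSet M))

/-- A diagonal operator of `M`: `d = Σ_k λ_k p_k` with pairwise orthogonal
projections `p_k ∈ M`, the series converging in the strong operator topology. -/
def IsDiagonal (M : VonNeumannAlgebra H) (d : H →L[ℂ] H) : Prop :=
  ∃ (p : ℕ → H →L[ℂ] H) (lam : ℕ → ℂ),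
    (∀ k, p k ∈ M) ∧ (∀ k, IsProjection (p k)) ∧
    (∀ k l, k ≠ l → p k * p l = 0) ∧
    ∀ ξ : H, HasSum (fun k => lam k • (p k ξ)) (d ξ)

end VNA

namespace VNA

variable {H : Type*} [NormedAddCommGroup H] [InnerProductSpace ℂ H] [CompleteSpace H]

lemma mem_of_comm (M : VonNeumannAlgebra H) (x : H →L[ℂ] H)
    (h : ∀ y : H →L[ℂ] H, (∀ m ∈ M, m * y = y * m) → y * x = x * y) : x ∈ M := by
  rw [← M.commutant_commutant, VonNeumannAlgebra.mem_commutant_iff]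
  intro y hy
  exact h y (VonNeumannAlgebra.mem_commutant_iff.1 hy)

lemma comm_star (M : VonNeumannAlgebra H) (y : H →L[ℂ] H)
    (h : ∀ m ∈ M, m * y = y * m) : ∀ m ∈ M, m * star y = star y * m := by
  intro m hm
  have := congrArg star (h (star m) (star_mem hm))
  simpa using this.symm

lemma smul_mem_vn (M : VonNeumannAlgebra H) (c : ℂ) {x : H →L[ℂ] H} (hx : x ∈ M) : c • x ∈ M :=
  mem_of_comm M _ fun y hy => by rw [mul_smul_comm, smul_mul_assoc, hy x hx]

lemma IsProjection.sub {p q : H →L[ℂ] H} (hp : IsProjection p) (hq : IsProjection q)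
    (h : p * q = q) : IsProjection (p - q) := by
  have h' : q * p = q := by
    have := congrArg star h
    simpa [hp.2, hq.2] using this
  refine ⟨?_, by simp [hp.2, hq.2]⟩
  simp only [sub_mul, mul_sub, hp.1, hq.1, h, h']
  abel

lemma IsProjection.nonneg {p : H →L[ℂ] H} (hp : IsProjection p) : 0 ≤ p := by
  have := star_mul_self_nonneg p
  rwa [hp.2, hp.1] at this

lemma IsProjection.compl {p : H →L[ℂ] H} (hp : IsProjection p) : IsProjection (1 - p) :=
  IsProjection.sub ⟨by simp, by simp⟩ hp (by simp)

lemma isProjection_starProjection (K : Submodule ℂ H) [K.HasOrthogonalProjection] :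
    IsProjection K.starProjection :=
  ⟨K.isIdempotentElem_starProjection, (isStarProjection_starProjection (U := K)).isSelfAdjoint⟩

lemma IsProjection.mul {p q : H →L[ℂ] H} (hp : IsProjection p) (hq : IsProjection q)
    (h : p * q = q * p) : IsProjection (p * q) := by
  refine ⟨?_, by rw [star_mul, hp.2, hq.2, h]⟩
  calc p * q * (p * q) = p * (q * p) * q := by simp only [mul_assoc]
    _ = p * p * (q * q) := by rw [← h]; simp only [mul_assoc]
    _ = p * q := by rw [hp.1, hq.1]

/-- the range of a positive part: density rule for the closure of the range -/
lemma closure_range_rule (h b : H →L[ℂ] H) (hb : b * h = 0) :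
    b * (h.range.topologicalClosure).starProjection = 0 := by
  have h1 : h.range ≤ b.ker := by
    rintro _ ⟨ξ, rfl⟩
    exact congrArg (fun t : H →L[ℂ] H => t ξ) hb
  have h2 : h.range.topologicalClosure ≤ b.ker :=
    Submodule.topologicalClosure_minimal _ h1 b.isClosed_ker
  ext ξ
  exact h2 (Submodule.starProjection_apply_mem _ ξ)

lemma polar (M : VonNeumannAlgebra H) (a : H →L[ℂ] H) (ha : a ∈ M) :
    ∃ w ∈ M, IsProjection (star w * w) ∧ a * (star w * w) = a ∧
      (∀ b : H →L[ℂ] H, b * a = 0 → b * w = 0) ∧ (∀ b : H →L[ℂ] H, a * b = 0 → w * b = 0) := by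
  set h : H →L[ℂ] H := CFC.abs a with hh
  have hsa : star h = h := (CFC.abs_nonneg a).isSelfAdjoint
  have hsq : h * h = star a * a := CFC.abs_mul_abs a
  have hnorm : ∀ ξ, ‖a ξ‖ = ‖h ξ‖ := by
    intro ξ
    have e1 : ‖a ξ‖ ^ 2 = ‖h ξ‖ ^ 2 := by
      have A := ContinuousLinearMap.apply_norm_sq_eq_inner_adjoint_left a ξ
      have B := ContinuousLinearMap.apply_norm_sq_eq_inner_adjoint_left h ξ
      rw [A, B]
      have : (adjoint h) ∘L h = (adjoint a) ∘L a := by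
        have : star h * h = star a * a := by rw [hsa, hsq]
        exact this
      rw [this]
    exact (sq_eq_sq₀ (norm_nonneg _) (norm_nonneg _)).1 e1
  set K : Submodule ℂ H := h.range.topologicalClosure with hK
  set E := K.starProjection with hE
  have hEp : IsProjection E := isProjection_starProjection K
  have rule : ∀ b : H →L[ℂ] H, b * h = 0 → b * E = 0 := fun b hb => closure_range_rule h b hb
  have hmem : ∀ ξ, h ξ ∈ K := fun ξ => Submodule.le_topologicalClosure _ ⟨ξ, rfl⟩
  have hEh : E * h = h := by
    ext ξ
    exact Submodule.starProjection_eq_self_iff.2 (hmem ξ)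
  have hhE : h * E = h := by
    have := congrArg star hEh
    simpa [hsa, hEp.2] using this
  let e : H →ₗ[ℂ] K := (h : H →ₗ[ℂ] H).codRestrict K hmem
  have hdense : DenseRange e := by
    intro x
    rw [Metric.mem_closure_iff]
    intro ε hε
    have hx : (x : H) ∈ closure (h.range : Set H) := x.2
    obtain ⟨_, ⟨ξ, rfl⟩, hξ⟩ := Metric.mem_closure_iff.1 hx ε hε
    exact ⟨e ξ, ⟨ξ, rfl⟩, hξ⟩
  have hbd : ∃ C, ∀ x, ‖(a : H →ₗ[ℂ] H) x‖ ≤ C * ‖e x‖ := ⟨1, fun x => by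
    rw [one_mul]; exact (hnorm x).le⟩
  let g : K →L[ℂ] H := (a : H →ₗ[ℂ] H).extendOfNorm e
  let w : H →L[ℂ] H := g ∘L K.orthogonalProjectionOnto
  have hwh : w * h = a := by
    ext ξ
    have : K.orthogonalProjectionOnto (h ξ) = e ξ :=
      Submodule.orthogonalProjectionOnto_mem_subspace_eq_self (e ξ)
    change g (K.orthogonalProjectionOnto (h ξ)) = a ξ
    rw [this]
    exact LinearMap.extendOfNorm_eq hdense hbd ξ
  have hwE : w * E = w := by
    ext ξ
    have : K.orthogonalProjectionOnto (E ξ) = K.orthogonalProjectionOnto ξ :=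
      Submodule.orthogonalProjectionOnto_mem_subspace_eq_self _
    change g (K.orthogonalProjectionOnto (E ξ)) = g (K.orthogonalProjectionOnto ξ)
    rw [this]
  have hEw : E * star w = star w := by
    have := congrArg star hwE
    simpa [hEp.2] using this
  have hww : star w * w = E := by
    have s1 : (h * (star w * w - E)) * h = 0 := by
      have : star h * star w * (w * h) = h * h := by
        rw [← star_mul, hwh, hsq]
      rw [hsa] at this
      have e2 : (h * (star w * w - E)) * h = h * star w * (w * h) - h * (E * h) := by noncomm_ring
      rw [e2, this, hEh, sub_self]
    have s2 : h * (star w * w - E) = 0 := by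
      have := rule _ s1
      rwa [mul_assoc, sub_mul, mul_assoc, hwE, hEp.1] at this
    have s3 : (star w * w - E) * h = 0 := by
      have := congrArg star s2
      simpa [hsa, hEp.2] using this
    have := rule _ s3
    rw [sub_mul, mul_assoc, hwE, hEp.1] at this
    exact sub_eq_zero.1 this
  refine ⟨w, ?_, ?_, ?_, ?_, ?_⟩
  · apply mem_of_comm
    have key : ∀ y : H →L[ℂ] H, (∀ m ∈ M, m * y = y * m) → Commute h y := by
      intro y hy
      exact Commute.cfcAbs_left (hy a ha) (comm_star M y hy a ha)
    have key2 : ∀ y : H →L[ℂ] H, (∀ m ∈ M, m * y = y * m) → E * y * E = y * E := by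
      intro y hy
      have : ((1 - E) * y) * h = 0 := by
        rw [mul_assoc, ← (key y hy).eq, ← mul_assoc, sub_mul, one_mul, hEh, sub_self, zero_mul]
      have := rule _ this
      rw [sub_mul, sub_mul, one_mul] at this
      exact (sub_eq_zero.1 this).symm
    intro y hy
    have k1 : E * y * E = E * y := by
      have := congrArg star (key2 _ (comm_star M y hy))
      simpa [hEp.2, mul_assoc] using this
    have k2 : (y * w - w * y) * h = 0 := by
      rw [sub_mul, mul_assoc, hwh, mul_assoc, ← (key y hy).eq, ← mul_assoc, hwh, hy a ha, sub_self]
    have k3 := rule _ k2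
    rw [sub_mul, mul_assoc, hwE] at k3
    rw [sub_eq_zero.1 k3]
    calc w * y * E = w * (E * y * E) := by rw [key2 y hy, mul_assoc]
      _ = w * (E * y) := by rw [k1]
      _ = w * y := by rw [← mul_assoc, hwE]
  · rw [hww]; exact hEp
  · rw [hww, ← hwh, mul_assoc, hhE]
  · intro b hb
    rw [← hwh, ← mul_assoc] at hb
    have := rule _ hb
    rwa [mul_assoc, hwE] at this
  · intro b hb
    have b1 : star (h * b) * (h * b) = 0 := by
      rw [star_mul, hsa]
      calc star b * h * (h * b) = star b * (h * h) * b := by noncomm_ring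
        _ = star b * star a * (a * b) := by rw [hsq]; noncomm_ring
        _ = 0 := by rw [hb, mul_zero]
    have b2 : h * b = 0 := CStarRing.star_mul_self_eq_zero_iff _ |>.1 b1
    have b3 : star b * h = 0 := by
      have := congrArg star b2
      simpa [hsa] using this
    have b4 : E * b = 0 := by
      have := congrArg star (rule _ b3)
      simpa [hEp.2] using this
    rw [← hwE, mul_assoc, b4, mul_zero]

end VNA

namespace VNA

variable {H : Type*} [NormedAddCommGroup H] [InnerProductSpace ℂ H] [CompleteSpace H]

lemma pi_proj {u : H →L[ℂ] H} (h : u * star u * u = u) :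
    IsProjection (star u * u) ∧ IsProjection (u * star u) := by
  refine ⟨⟨?_, by simp⟩, ⟨?_, by simp⟩⟩
  · rw [mul_assoc, ← mul_assoc u, h]
  · rw [← mul_assoc, h]

lemma pi_of_proj {u : H →L[ℂ] H} (h : IsProjection (star u * u)) : u * star u * u = u := by
  have : star (u * star u * u - u) * (u * star u * u - u) = 0 := by
    have e : star (u * star u * u - u) * (u * star u * u - u)
      = (star u * u) * (star u * u) * (star u * u) - (star u * u) * (star u * u)
        - (star u * u) * (star u * u) + star u * u := by
      simp only [star_sub, star_mul, star_star]
      noncomm_ring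
    rw [e, h.1, h.1]; abel
  exact sub_eq_zero.1 ((CStarRing.star_mul_self_eq_zero_iff _).1 this)

lemma norm_le_one_of_pi {u : H →L[ℂ] H} (h : u * star u * u = u) : ‖u‖ ≤ 1 := by
  have hp := (pi_proj h).1
  have h1 : ‖star u * u‖ ≤ 1 := by
    have : IsStarProjection (star u * u) := ⟨hp.1, hp.2⟩
    exact IsStarProjection.norm_le _ this
  rw [CStarRing.norm_star_mul_self] at h1
  nlinarith [norm_nonneg u]

lemma sum_pi {ι : Type*} (M : VonNeumannAlgebra H) (u : ι → H →L[ℂ] H) (hu : ∀ i, u i ∈ M)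
    (hpi : ∀ i, u i * star (u i) * u i = u i)
    (h1 : ∀ i j, i ≠ j → star (u i) * u j = 0) (h2 : ∀ i j, i ≠ j → u i * star (u j) = 0) :
    ∃ s ∈ M, IsProjection (star s * s) ∧
      (∀ b : H →L[ℂ] H, (∀ i, b * u i = 0) → b * s = 0) ∧
      (∀ b : H →L[ℂ] H, (∀ i, u i * b = 0) → s * b = 0) ∧
      (∀ i, s * (star (u i) * u i) = u i) ∧ (∀ i, star s * u i = star (u i) * u i) := by
  classical
  -- finite partial sums are partial isometries
  have fin : ∀ F : Finset ι, ‖∑ i ∈ F, u i‖ ≤ 1 := by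
    intro F
    apply norm_le_one_of_pi
    have e1 : star (∑ i ∈ F, u i) * (∑ i ∈ F, u i) = ∑ i ∈ F, star (u i) * u i := by
      rw [star_sum, Finset.sum_mul_sum]
      apply Finset.sum_congr rfl
      intro i hi
      rw [Finset.sum_eq_single i]
      · intro j _ hj; exact h1 i j hj.symm
      · intro h; exact absurd hi h
    rw [mul_assoc, e1, Finset.sum_mul_sum]
    apply Finset.sum_congr rfl
    intro i hi
    rw [Finset.sum_eq_single i]
    · rw [← mul_assoc, hpi]
    · intro j _ hj; rw [← mul_assoc, h2 i j hj.symm, zero_mul]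
    · intro h; exact absurd hi h
  have orth : ∀ ξ i j, i ≠ j → inner ℂ (u i ξ) (u j ξ) = 0 := by
    intro ξ i j hij
    have : inner ℂ (u i ξ) (u j ξ) = inner ℂ ξ ((star (u i) * u j) ξ) := by
      rw [ContinuousLinearMap.star_eq_adjoint, mul_apply_eq_comp,
        ContinuousLinearMap.adjoint_inner_right]
    rw [this, h1 i j hij]; simp
  have hsummable : ∀ ξ, Summable (fun i => u i ξ) := by
    intro ξ
    let G : ι → Submodule ℂ H := fun i => ℂ ∙ (u i ξ)
    have hG : OrthogonalFamily ℂ (fun i => G i) (fun i => (G i).subtypeₗᵢ) := by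
      intro i j hij x y
      obtain ⟨c, hc⟩ := Submodule.mem_span_singleton.1 x.2
      obtain ⟨d, hd⟩ := Submodule.mem_span_singleton.1 y.2
      change inner ℂ (x : H) (y : H) = 0
      rw [← hc, ← hd, inner_smul_left, inner_smul_right, orth ξ i j hij]; simp
    have := (hG.summable_iff_norm_sq_summable
      (fun i => ⟨u i ξ, Submodule.mem_span_singleton_self _⟩)).2 ?_
    · exact this
    · apply summable_of_sum_le (c := ‖ξ‖ ^ 2)
      · intro i; positivity
      · intro F
        have := hG.norm_sum (fun i => ⟨u i ξ, Submodule.mem_span_singleton_self _⟩) F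
        rw [← this]
        have e : ∑ i ∈ F, (G i).subtypeₗᵢ ⟨u i ξ, Submodule.mem_span_singleton_self _⟩
            = (∑ i ∈ F, u i) ξ := by
          rw [_root_.sum_apply]; rfl
        rw [e]
        have := (∑ i ∈ F, u i).le_of_opNorm_le (fin F) ξ
        rw [one_mul] at this
        gcongr
  let s0 : H →ₗ[ℂ] H :=
    { toFun := fun ξ => ∑' i, u i ξ
      map_add' := fun x y => by
        simp only [map_add]
        exact (hsummable x).tsum_add (hsummable y)
      map_smul' := fun c x => by
        simp only [map_smul, RingHom.id_apply]
        exact (hsummable x).tsum_const_smul c }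
  let s : H →L[ℂ] H := s0.mkContinuous 1 (by
    intro ξ
    rw [one_mul]
    refine le_of_tendsto ((hsummable ξ).hasSum.norm) (Filter.Eventually.of_forall fun F => ?_)
    have := (∑ i ∈ F, u i).le_of_opNorm_le (fin F) ξ
    rwa [one_mul, _root_.sum_apply] at this)
  have hs : ∀ ξ, HasSum (fun i => u i ξ) (s ξ) := fun ξ => (hsummable ξ).hasSum
  have hl : ∀ b : H →L[ℂ] H, (∀ i, b * u i = 0) → b * s = 0 := by
    intro b hb
    ext ξ
    have := (hs ξ).mapL b
    have e : (fun i => b (u i ξ)) = fun _ => 0 := by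
      funext i; exact congrArg (fun t : H →L[ℂ] H => t ξ) (hb i)
    rw [e] at this
    exact this.unique hasSum_zero
  have hr : ∀ b : H →L[ℂ] H, (∀ i, u i * b = 0) → s * b = 0 := by
    intro b hb
    ext ξ
    have := hs (b ξ)
    have e : (fun i => u i (b ξ)) = fun _ => 0 := by
      funext i; exact congrArg (fun t : H →L[ℂ] H => t ξ) (hb i)
    rw [e] at this
    exact this.unique hasSum_zero
  have hsp : ∀ i, s * (star (u i) * u i) = u i := by
    intro i
    ext ξ
    have := hs ((star (u i) * u i) ξ)
    have e : ∀ j, j ≠ i → u j ((star (u i) * u i) ξ) = 0 := by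
      intro j hj
      have : u j * (star (u i) * u i) = 0 := by rw [← mul_assoc, h2 j i hj, zero_mul]
      exact congrArg (fun t : H →L[ℂ] H => t ξ) this
    have := this.unique (hasSum_single i e)
    have e2 : u i ((star (u i) * u i) ξ) = u i ξ := by
      have : u i * (star (u i) * u i) = u i := by rw [← mul_assoc, hpi]
      exact congrArg (fun t : H →L[ℂ] H => t ξ) this
    rw [e2] at this
    exact this
  have hsu : ∀ i, star (u i) * s = star (u i) * u i := by
    intro i
    ext ξ
    have := (hs ξ).mapL (star (u i))
    have e : ∀ j, j ≠ i → star (u i) (u j ξ) = 0 := by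
      intro j hj
      exact congrArg (fun t : H →L[ℂ] H => t ξ) (h1 i j hj.symm)
    exact this.unique (hasSum_single i e)
  have hsu' : ∀ i, star s * u i = star (u i) * u i := by
    intro i
    have := congrArg star (hsu i)
    simpa using this
  refine ⟨s, ?_, ?_, hl, hr, hsp, hsu'⟩
  · apply mem_of_comm
    intro y hy
    ext ξ
    have a1 := (hs ξ).mapL y
    have a2 := hs (y ξ)
    have e : (fun i => y (u i ξ)) = fun i => u i (y ξ) := by
      funext i; exact congrArg (fun t : H →L[ℂ] H => t ξ) (hy (u i) (hu i)).symm
    rw [e] at a1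
    exact a1.unique a2
  · have : (s * star s - 1) * s = 0 := by
      apply hl
      intro i
      rw [sub_mul, one_mul, mul_assoc, hsu', hsp, sub_self]
    rw [sub_mul, one_mul] at this
    exact (pi_proj (sub_eq_zero.1 this)).1

lemma comparison (M : VonNeumannAlgebra H) (e f : H →L[ℂ] H) (he : e ∈ M) (hf : f ∈ M)
    (hep : IsProjection e) (hfp : IsProjection f) :
    ∃ v ∈ M, IsProjection (star v * v) ∧ v * (1 - e) = 0 ∧ (1 - f) * v = 0 ∧
      ∀ x ∈ M, (f - v * star v) * x * (e - star v * v) = 0 := by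
  classical
  let 𝒮 : Set (Set (H →L[ℂ] H)) := {S | (∀ u ∈ S, u ∈ M ∧ u * star u * u = u ∧
      u * (1 - e) = 0 ∧ (1 - f) * u = 0) ∧
      ∀ u ∈ S, ∀ u' ∈ S, u ≠ u' → star u * u' = 0 ∧ u * star u' = 0}
  obtain ⟨S, hS⟩ : ∃ S, Maximal (· ∈ 𝒮) S := by
    apply zorn_subset
    intro c hc hch
    refine ⟨⋃₀ c, ⟨?_, ?_⟩, fun s hs => Set.subset_sUnion_of_mem hs⟩
    · rintro u ⟨T, hT, hu⟩
      exact (hc hT).1 u hu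
    · rintro u ⟨T, hT, hu⟩ u' ⟨T', hT', hu'⟩ hne
      rcases hch.total hT hT' with h | h
      · exact (hc hT').2 u (h hu) u' hu' hne
      · exact (hc hT).2 u hu u' (h hu') hne
  obtain ⟨hS1, hS2⟩ := hS.prop
  obtain ⟨v, hvM, hvp, hl, hr, hsp, hsu⟩ := sum_pi M (fun u : S => (u : H →L[ℂ] H))
    (fun u => (hS1 u u.2).1) (fun u => (hS1 u u.2).2.1)
    (fun i j hij => (hS2 i i.2 j j.2 (fun h => hij (Subtype.ext h))).1)
    (fun i j hij => (hS2 i i.2 j j.2 (fun h => hij (Subtype.ext h))).2)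
  have hve : v * (1 - e) = 0 := hr _ fun i => (hS1 i i.2).2.2.1
  have hfv : (1 - f) * v = 0 := hl _ fun i => (hS1 i i.2).2.2.2
  refine ⟨v, hvM, hvp, hve, hfv, ?_⟩
  intro x hx
  obtain ⟨w, hwM, hwp, haw, hwl, hwr⟩ := polar M ((f - v * star v) * x * (e - star v * v))
    (mul_mem (mul_mem (sub_mem hf (mul_mem hvM (star_mem hvM))) hx)
      (sub_mem he (mul_mem (star_mem hvM) hvM)))
  -- `w` is orthogonal to everything in `S`
  have huw : ∀ u ∈ S, star u * w = 0 := by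
    intro u hu
    apply hwl
    have a1 : star u * (f - v * star v) = 0 := by
      have b1 : star u * f = star u := by
        have := congrArg star (hS1 u hu).2.2.2
        rw [star_mul, star_sub, star_one, hfp.2, mul_sub, mul_one, star_zero] at this
        exact (sub_eq_zero.1 this).symm
      have b2 : star u * v = star u * u := by
        have := congrArg star (hsu ⟨u, hu⟩)
        simpa using this
      have b3 : star u * u * star v = star u := by
        have := congrArg star (hsp ⟨u, hu⟩)
        simpa [mul_assoc] using this
      rw [mul_sub, b1, ← mul_assoc, b2, b3, sub_self]
    rw [← mul_assoc, ← mul_assoc, a1, zero_mul, zero_mul]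
  have hwu : ∀ u ∈ S, u * star w = 0 := by
    intro u hu
    have : w * star u = 0 := by
      apply hwr
      have b1 : e * star u = star u := by
        have := congrArg star (hS1 u hu).2.2.1
        rw [star_mul, star_sub, star_one, hep.2, sub_mul, one_mul, star_zero] at this
        exact (sub_eq_zero.1 this).symm
      have b0 : star u * u * star u = star u := by
        have := congrArg star (hS1 u hu).2.1
        simpa [mul_assoc] using this
      have b2 : v * star u = u * star u := by
        have := congrArg (· * star u) (hsp ⟨u, hu⟩)
        simp only [mul_assoc] at this b0
        rwa [b0] at this
      have b3 : star v * u = star u * u := hsu ⟨u, hu⟩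
      have a1 : (e - star v * v) * star u = 0 := by
        rw [sub_mul, b1, mul_assoc, b2, ← mul_assoc, b3, b0, sub_self]
      rw [mul_assoc, a1, mul_zero]
    have := congrArg star this
    simpa using this
  have hw1 : w * (1 - e) = 0 := by
    apply hwr
    have : (e - star v * v) * (1 - e) = 0 := by
      rw [sub_mul, mul_assoc, hve, mul_sub, hep.1]; simp
    rw [mul_assoc, this, mul_zero]
  have hw2 : (1 - f) * w = 0 := by
    apply hwl
    have : (1 - f) * (f - v * star v) = 0 := by
      rw [mul_sub, ← mul_assoc, hfv, sub_mul, hfp.1]; simp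
    rw [← mul_assoc, ← mul_assoc, this, zero_mul, zero_mul]
  have hins : insert w S ∈ 𝒮 := by
    refine ⟨?_, ?_⟩
    · rintro u (rfl | hu)
      · exact ⟨hwM, pi_of_proj hwp, hw1, hw2⟩
      · exact hS1 u hu
    · rintro u (rfl | hu) u' (rfl | hu') hne
      · exact absurd rfl hne
      · constructor
        · have := congrArg star (huw u' hu')
          simpa using this
        · have := congrArg star (hwu u' hu')
          simpa using this
      · exact ⟨huw u hu, hwu u hu⟩
      · exact hS2 u hu u' hu' hne
  have hwS : w ∈ S := hS.le_of_ge hins (Set.subset_insert w S) (Set.mem_insert w S)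
  rw [← haw, huw w hwS, mul_zero]

lemma central_support (M : VonNeumannAlgebra H) (e : H →L[ℂ] H) (he : e ∈ M) :
    ∃ z, IsCentralProjection M z ∧ z * e = e ∧
      ∀ b : H →L[ℂ] H, (∀ x ∈ M, b * x * e = 0) → b * z = 0 := by
  let K0 : Submodule ℂ H := Submodule.span ℂ {η | ∃ x ∈ M, ∃ ξ, η = (x * e) ξ}
  let K := K0.topologicalClosure
  have rule : ∀ b : H →L[ℂ] H, (∀ x ∈ M, b * x * e = 0) → b * K.starProjection = 0 := by
    intro b hb
    have h1 : K0 ≤ b.ker := by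
      apply Submodule.span_le.2
      rintro _ ⟨x, hx, ξ, rfl⟩
      exact congrArg (fun t : H →L[ℂ] H => t ξ) (by rw [← mul_assoc]; exact hb x hx : b * (x * e) = 0)
    have h2 : K ≤ b.ker := Submodule.topologicalClosure_minimal _ h1 b.isClosed_ker
    ext ξ
    exact h2 (Submodule.starProjection_apply_mem _ ξ)
  have hz := isProjection_starProjection K
  have hze : ∀ x ∈ M, K.starProjection * (x * e) = x * e := by
    intro x hx
    ext ξ
    exact Submodule.starProjection_eq_self_iff.2
      (Submodule.le_topologicalClosure _ (Submodule.subset_span ⟨x, hx, ξ, rfl⟩))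
  have comm : ∀ y : H →L[ℂ] H,
      (∀ x ∈ M, (1 - K.starProjection) * y * x * e = 0) →
      (∀ x ∈ M, (1 - K.starProjection) * star y * x * e = 0) →
      K.starProjection * y = y * K.starProjection := by
    intro y h1 h2
    have a1 := rule _ h1
    have a2 := congrArg star (rule _ h2)
    simp only [star_mul, star_sub, star_one, star_star, star_zero, hz.2] at a2
    rw [sub_mul, sub_mul, one_mul] at a1
    rw [← mul_assoc, mul_sub, mul_one] at a2
    exact (sub_eq_zero.1 a2).trans (sub_eq_zero.1 a1).symm
  have hM : ∀ y ∈ M, ∀ x ∈ M, (1 - K.starProjection) * y * x * e = 0 := by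
    intro y hy x hx
    have := hze (y * x) (mul_mem hy hx)
    rw [mul_assoc, mul_assoc, ← mul_assoc y, sub_mul, one_mul, this, sub_self]
  have hM' : ∀ y : H →L[ℂ] H, (∀ m ∈ M, m * y = y * m) →
      ∀ x ∈ M, (1 - K.starProjection) * y * x * e = 0 := by
    intro y hy x hx
    have := hze x hx
    rw [mul_assoc, mul_assoc, ← hy _ (mul_mem hx he), ← mul_assoc, sub_mul, one_mul, this, sub_self,
      zero_mul]
  refine ⟨K.starProjection, ⟨hz, ?_, ?_⟩, ?_, rule⟩
  · apply mem_of_comm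
    intro y hy
    exact (comm y (hM' y hy) (hM' _ (comm_star M y hy))).symm
  · intro y hy
    exact comm y (hM y hy) (hM _ (star_mem hy))
  · simpa using hze 1 (one_mem M)

end VNA

namespace VNA

variable {H : Type*} [NormedAddCommGroup H] [InnerProductSpace ℂ H] [CompleteSpace H]

lemma tau_mono {M : VonNeumannAlgebra H} {τ : (H →L[ℂ] H) → ENNReal} (hτ : IsFNSTrace M τ)
    {p q : H →L[ℂ] H} (hp : p ∈ M) (hq : q ∈ M) (hpp : IsProjection p) (hqp : IsProjection q)
    (h : p * q = q) : τ q ≤ τ p := by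
  have := hτ.additive q (p - q) hq (sub_mem hp hq) hqp.nonneg (hpp.sub hqp h).nonneg
  rw [add_sub_cancel] at this
  rw [this]
  exact le_self_add

lemma tau_central {M : VonNeumannAlgebra H} {τ : (H →L[ℂ] H) → ENNReal} (hτ : IsFNSTrace M τ)
    {p z : H →L[ℂ] H} (hp : p ∈ M) (hpp : IsProjection p) (hz : IsCentralProjection M z) :
    τ (z * p) ≤ τ p := by
  have hc := hz.2.2 p hp
  apply tau_mono hτ hp (mul_mem hz.2.1 hp) hpp (hz.1.mul hpp hc)
  rw [hc, ← mul_assoc, hpp.1]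

lemma finite_of_tau {M : VonNeumannAlgebra H} {τ : (H →L[ℂ] H) → ENNReal} (hτ : IsFNSTrace M τ)
    {p : H →L[ℂ] H} (hp : p ∈ M) (hpp : IsProjection p) (hfin : τ p < ⊤) :
    IsFiniteProjection M p := by
  refine ⟨hp, hpp, ?_⟩
  rintro q hq hqp hle ⟨v, hv, hv1, hv2⟩
  have e1 : τ q = τ p := by rw [← hv1, ← hv2]; exact hτ.tracial v hv
  have e2 := hτ.additive q (p - q) hq (sub_mem hp hq) hqp.nonneg (hpp.sub hqp hle).nonneg
  rw [add_sub_cancel, e1] at e2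
  have e3 : τ (p - q) = 0 := by
    have : τ p + 0 = τ p + τ (p - q) := by rw [add_zero]; exact e2
    exact ((ENNReal.add_right_inj hfin.ne).1 this).symm
  have := hτ.faithful (p - q) (sub_mem hp hq) (hpp.sub hqp hle).nonneg e3
  exact (sub_eq_zero.1 this).symm

/-- copy of `f` under `P - g` -/
lemma exists_copy {M : VonNeumannAlgebra H} {τ : (H →L[ℂ] H) → ENNReal} (hτ : IsFNSTrace M τ)
    {P : H →L[ℂ] H} (hP : P ∈ M) (hPp : IsProjection P)
    (hinf : ∀ z, IsCentralProjection M z → τ (z * P) < ⊤ → z * P = 0)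
    {f g : H →L[ℂ] H} (hf : f ∈ M) (hfp : IsProjection f) (hPf : P * f = f) (hft : τ f < ⊤)
    (hg : g ∈ M) (hgp : IsProjection g) (hPg : P * g = g) (hgt : τ g < ⊤) :
    ∃ u ∈ M, star u * u = f ∧ P * u = u ∧ g * u = 0 := by
  have hPgp := hPp.sub hgp hPg
  obtain ⟨v, hv, hvp, hv1, hv2, hcomp⟩ := comparison M f (P - g) hf (sub_mem hP hg) hfp hPgp
  have hvf : v * f = v := by
    rw [mul_sub, mul_one] at hv1
    exact (sub_eq_zero.1 hv1).symm
  have hfv : f * star v = star v := by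
    have := congrArg star hvf
    simpa [hfp.2] using this
  have hPgv : (P - g) * v = v := by
    rw [sub_mul, one_mul] at hv2
    exact (sub_eq_zero.1 hv2).symm
  have hvvM : v * star v ∈ M := mul_mem hv (star_mem hv)
  have hvvM' : star v * v ∈ M := mul_mem (star_mem hv) hv
  have hvv := (pi_proj (pi_of_proj hvp)).2
  obtain ⟨z, hz, hze, hzb⟩ := central_support M (f - star v * v) (sub_mem hf hvvM')
  have h0 := hzb _ hcomp
  have hzP : P * z = g * z + v * star v * z := by
    rw [sub_mul, sub_mul] at h0
    rw [sub_sub, sub_eq_zero] at h0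
    exact h0
  have hzP' : z * P = z * g + z * (v * star v) := by
    rw [hz.2.2 P hP, hz.2.2 g hg, hz.2.2 _ hvvM, hzP]
  have hzg := hz.1.mul hgp (hz.2.2 g hg)
  have hzv := hz.1.mul hvv (hz.2.2 _ hvvM)
  have hlt : τ (z * P) < ⊤ := by
    rw [hzP', hτ.additive _ _ (mul_mem hz.2.1 hg) (mul_mem hz.2.1 hvvM) hzg.nonneg hzv.nonneg]
    apply ENNReal.add_lt_top.2
    refine ⟨(tau_central hτ hg hgp hz).trans_lt hgt, (tau_central hτ hvvM hvv hz).trans_lt ?_⟩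
    rw [← hτ.tracial v hv]
    refine lt_of_le_of_lt (tau_mono hτ hf hvvM' hfp hvp ?_) hft
    rw [← mul_assoc, hfv]
  have hz0 := hinf z hz hlt
  have hPe : P * (f - star v * v) = f - star v * v := by
    have : P * star v = star v := by rw [← hfv, ← mul_assoc, hPf]
    rw [mul_sub, hPf, ← mul_assoc, this]
  have he0 : f - star v * v = 0 := by
    rw [← hze, ← hPe, ← mul_assoc, hz0, zero_mul]
  have hPPg : P * (P - g) = P - g := by rw [mul_sub, hPp.1, hPg]
  have hgP : g * P = g := by
    have := congrArg star hPg
    simpa [hPp.2, hgp.2] using this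
  refine ⟨v, hv, (sub_eq_zero.1 he0).symm, ?_, ?_⟩
  · rw [← hPgv, ← mul_assoc, hPPg]
  · rw [← hPgv, ← mul_assoc, mul_sub, hgP, hgp.1, sub_self, zero_mul]

/-- absorbing a τ-finite projection -/
lemma absorb {M : VonNeumannAlgebra H} {τ : (H →L[ℂ] H) → ENNReal} (hτ : IsFNSTrace M τ)
    {P : H →L[ℂ] H} (hP : P ∈ M) (hPp : IsProjection P)
    (hinf : ∀ z, IsCentralProjection M z → τ (z * P) < ⊤ → z * P = 0)
    {f : H →L[ℂ] H} (hf : f ∈ M) (hfp : IsProjection f) (hPf : P * f = f) (hft : τ f < ⊤) :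
    ∃ u ∈ M, star u * u = P ∧ P * u = u ∧ f * u = 0 := by
  let G := {g : H →L[ℂ] H // g ∈ M ∧ IsProjection g ∧ P * g = g ∧ τ g < ⊤}
  have hex : ∀ g : G, ∃ u ∈ M, star u * u = f ∧ P * u = u ∧ g.1 * u = 0 := fun g =>
    exists_copy hτ hP hPp hinf hf hfp hPf hft g.2.1 g.2.2.1 g.2.2.2.1 g.2.2.2.2
  choose c hcM hcf hcP hcg using hex
  have hpic : ∀ g, c g * star (c g) * c g = c g := fun g => pi_of_proj (by rw [hcf]; exact hfp)
  have hstep : ∀ g : G, (g.1 + c g * star (c g)) ∈ M ∧ IsProjection (g.1 + c g * star (c g)) ∧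
      P * (g.1 + c g * star (c g)) = g.1 + c g * star (c g) ∧ τ (g.1 + c g * star (c g)) < ⊤ := by
    intro g
    have hq := (pi_proj (hpic g)).2
    have hqM : c g * star (c g) ∈ M := mul_mem (hcM g) (star_mem (hcM g))
    have h1 : g.1 * (c g * star (c g)) = 0 := by rw [← mul_assoc, hcg, zero_mul]
    have h2 : (c g * star (c g)) * g.1 = 0 := by
      have := congrArg star h1
      rwa [star_mul, hq.2, g.2.2.1.2, star_zero] at this
    refine ⟨add_mem g.2.1 hqM, ⟨?_, ?_⟩, ?_, ?_⟩
    · rw [add_mul, mul_add, mul_add, h1, h2, g.2.2.1.1, hq.1]; simp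
    · rw [star_add, hq.2, g.2.2.1.2]
    · rw [mul_add, ← mul_assoc, hcP, g.2.2.2.1]
    · rw [hτ.additive _ _ g.2.1 hqM g.2.2.1.nonneg hq.nonneg, ← hτ.tracial _ (hcM g), hcf]
      exact ENNReal.add_lt_top.2 ⟨g.2.2.2.2, hft⟩
  let seq : ℕ → G := fun n => Nat.rec ⟨f, hf, hfp, hPf, hft⟩
    (fun _ g => ⟨g.1 + c g * star (c g), hstep g⟩) n
  have seq_succ : ∀ n, (seq (n+1)).1 = (seq n).1 + c (seq n) * star (c (seq n)) := fun n => rfl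
  let w : ℕ → H →L[ℂ] H := fun n => Nat.casesOn n f (fun m => c (seq m))
  have hwM : ∀ n, w n ∈ M := by
    rintro (_ | n)
    · exact hf
    · exact hcM _
  have hwf : ∀ n, star (w n) * w n = f := by
    rintro (_ | n)
    · change star f * f = f
      rw [hfp.2, hfp.1]
    · exact hcf _
  have hwP : ∀ n, P * w n = w n := by
    rintro (_ | n)
    · exact hPf
    · exact hcP _
  -- `w n` lies under `seq m` for `n ≤ m`
  have hws : ∀ m n, n ≤ m → (seq m).1 * w n = w n := by
    intro m
    induction m with
    | zero =>
      intro n hn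
      obtain rfl : n = 0 := by omega
      exact hfp.1
    | succ m ih =>
      intro n hn
      rw [seq_succ, add_mul]
      rcases Nat.lt_or_ge n (m+1) with h | h
      · rw [ih n (by omega)]
        have : star (c (seq m)) * w n = 0 := by
          rw [← ih n (by omega), ← mul_assoc]
          have := congrArg star (hcg (seq m))
          rw [star_mul, (seq m).2.2.1.2, star_zero] at this
          rw [this, zero_mul]
        rw [mul_assoc, this, mul_zero, add_zero]
      · obtain rfl : n = m + 1 := by omega
        change (seq m).1 * c (seq m) + c (seq m) * star (c (seq m)) * c (seq m) = c (seq m)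
        rw [hcg, hpic, zero_add]
  have horth' : ∀ m n, n < m → star (w m) * w n = 0 := by
    rintro (_ | m) n hn
    · omega
    · rw [← hws m n (by omega), ← mul_assoc]
      have := congrArg star (hcg (seq m))
      rw [star_mul, (seq m).2.2.1.2, star_zero] at this
      change star (c (seq m)) * _ * _ = 0
      rw [this, zero_mul]
  have horth : ∀ m n, m ≠ n → star (w m) * w n = 0 := by
    intro m n hmn
    rcases Nat.lt_or_gt_of_ne hmn with h | h
    · have := congrArg star (horth' n m h)
      simpa using this
    · exact horth' m n h
  have hw0 : w 0 = f := rfl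
  clear_value w
  have hpi : ∀ n, w n * star (w n) * w n = w n := fun n => pi_of_proj (by rw [hwf]; exact hfp)
  have hwf' : ∀ n, w n * f = w n := by
    intro n
    rw [← hwf n, ← mul_assoc, hpi]
  have hfw' : ∀ n, f * star (w n) = star (w n) := by
    intro n
    have := congrArg star (hwf' n)
    simpa [hfp.2] using this
  have huu : ∀ n, star (w (n+1) * star (w n)) * (w (n+1) * star (w n)) = w n * star (w n) := by
    intro n
    calc _ = w n * (star (w (n+1)) * w (n+1)) * star (w n) := by
          rw [star_mul, star_star]; simp only [mul_assoc]
      _ = _ := by rw [hwf, hwf']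
  obtain ⟨s, hsM, hsp, hl, hr, hs1, hs2⟩ := sum_pi M (fun n => w (n+1) * star (w n))
    (fun n => mul_mem (hwM _) (star_mem (hwM _)))
    (fun n => by
      rw [mul_assoc, huu]
      calc _ = w (n+1) * (star (w n) * w n) * star (w n) := by simp only [mul_assoc]
        _ = _ := by rw [hwf, hwf'])
    (fun i j hij => by
      calc _ = w i * (star (w (i+1)) * w (j+1)) * star (w j) := by
            rw [star_mul, star_star]; simp only [mul_assoc]
        _ = 0 := by rw [horth _ _ (by omega)]; simp)
    (fun i j hij => by
      calc _ = w (i+1) * (star (w i) * w j) * star (w (j+1)) := by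
            rw [star_mul, star_star]; simp only [mul_assoc]
        _ = 0 := by rw [horth _ _ hij]; simp)
  -- the initial projection `q` of `s` fixes all `w n`
  have hqw : ∀ n, star s * s * w n = w n := by
    intro n
    have a1 : star s * s * (w n * star (w n)) = w n * star (w n) := by
      rw [← huu n, mul_assoc, hs1, hs2]
    calc star s * s * w n = star s * s * (w n * star (w n) * w n) := by rw [hpi]
      _ = w n := by rw [← mul_assoc, a1, hpi]
  have hsP' : s * (1 - P) = 0 := by
    apply hr
    intro i
    have := congrArg star (hwP i)
    rw [star_mul, hPp.2] at this
    rw [mul_assoc, mul_sub, mul_one, this, sub_self, mul_zero]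
  have hsP : s * P = s := by
    rw [mul_sub, mul_one] at hsP'
    exact (sub_eq_zero.1 hsP').symm
  have hPs : P * star s = star s := by
    have := congrArg star hsP
    simpa [hPp.2] using this
  have hPs2 : P * s = s := by
    have : (1 - P) * s = 0 := by
      apply hl
      intro i
      rw [← mul_assoc, sub_mul, hwP, one_mul, sub_self, zero_mul]
    rw [sub_mul, one_mul] at this
    exact (sub_eq_zero.1 this).symm
  have hPq : P * (star s * s) = star s * s := by rw [← mul_assoc, hPs]
  have hd := hPp.sub hsp hPq
  have hds : (P - star s * s) * s = 0 := by
    apply hl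
    intro i
    rw [← mul_assoc, sub_mul, hwP, hqw, sub_self, zero_mul]
  have hds' : star s * (P - star s * s) = 0 := by
    have := congrArg star hds
    rwa [star_mul, hd.2, star_zero] at this
  have hdf : (P - star s * s) * f = 0 := by
    have := hqw 0
    rw [hw0] at this
    rw [sub_mul, hPf, this, sub_self]
  have hfd : f * (P - star s * s) = 0 := by
    have := congrArg star hdf
    rwa [star_mul, hd.2, hfp.2, star_zero] at this
  have hfs : f * s = 0 := by
    apply hl
    intro i
    have := horth 0 (i+1) (by omega)
    rw [hw0, hfp.2] at this
    rw [← mul_assoc, this, zero_mul]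
  refine ⟨s + (P - star s * s), add_mem hsM (sub_mem hP (mul_mem (star_mem hsM) hsM)), ?_, ?_, ?_⟩
  · rw [star_add, hd.2, add_mul, mul_add, mul_add, hds, hds', hd.1]
    abel
  · rw [mul_add, hPs2, mul_sub, hPp.1, hPq]
  · rw [mul_add, hfs, hfd, add_zero]

end VNA

namespace VNA

variable {H : Type*} [NormedAddCommGroup H] [InnerProductSpace ℂ H] [CompleteSpace H]

lemma diag_spectral {M : VonNeumannAlgebra H} {d : H →L[ℂ] H} (hd : IsDiagonal M d) :
    ∃ E : ℂ → H →L[ℂ] H, (∀ c, IsProjection (E c)) ∧ (∀ c, d * E c = c • E c) ∧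
      (∀ c, E c * d = c • E c) ∧ (∀ b : H →L[ℂ] H, (∀ c, b * E c = 0) → b = 0) := by
  obtain ⟨p, lam, -, hpp, hpo, hsum⟩ := hd
  have dp : ∀ k, d * p k = lam k • p k := by
    intro k
    ext ξ
    have := hsum (p k ξ)
    have e : ∀ l, l ≠ k → lam l • p l (p k ξ) = 0 := by
      intro l hl
      have : p l (p k ξ) = 0 := congrArg (fun t : H →L[ℂ] H => t ξ) (hpo l k hl)
      rw [this, smul_zero]
    have := this.unique (hasSum_single k e)
    have e2 : p k (p k ξ) = p k ξ := congrArg (fun t : H →L[ℂ] H => t ξ) (hpp k).1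
    rw [e2] at this
    exact this
  have pd : ∀ k, p k * d = lam k • p k := by
    intro k
    ext ξ
    have := (hsum ξ).mapL (p k)
    have e : ∀ l, l ≠ k → p k (lam l • p l ξ) = 0 := by
      intro l hl
      have : p k (p l ξ) = 0 := congrArg (fun t : H →L[ℂ] H => t ξ) (hpo k l hl.symm)
      rw [map_smul, this, smul_zero]
    have := this.unique (hasSum_single k e)
    have e2 : p k (p k ξ) = p k ξ := congrArg (fun t : H →L[ℂ] H => t ξ) (hpp k).1
    rw [map_smul, e2] at this
    exact this
  have rule : ∀ b : H →L[ℂ] H, (∀ k, b * p k = 0) → b * d = 0 := by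
    intro b hb
    ext ξ
    have := (hsum ξ).mapL b
    have e : (fun k => b (lam k • p k ξ)) = fun _ => 0 := by
      funext k
      have : b (p k ξ) = 0 := congrArg (fun t : H →L[ℂ] H => t ξ) (hb k)
      rw [map_smul, this, smul_zero]
    rw [e] at this
    exact this.unique hasSum_zero
  have rule' : ∀ b : H →L[ℂ] H, (∀ k, p k * b = 0) → d * b = 0 := by
    intro b hb
    ext ξ
    have := hsum (b ξ)
    have e : (fun k => lam k • p k (b ξ)) = fun _ => 0 := by
      funext k
      have : p k (b ξ) = 0 := congrArg (fun t : H →L[ℂ] H => t ξ) (hb k)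
      rw [this, smul_zero]
    rw [e] at this
    exact this.unique hasSum_zero
  have dsp : ∀ k, star d * p k = star (lam k) • p k := by
    intro k
    have := congrArg star (pd k)
    rwa [star_mul, star_smul, (hpp k).2] at this
  have hn : star d * d = d * star d := by
    set b := star d * d - d * star d with hb
    have hbs : star b = b := by simp [hb]
    have hbp : ∀ k, b * p k = 0 := by
      intro k
      rw [hb, sub_mul, mul_assoc, mul_assoc, dp, dsp, mul_smul_comm, mul_smul_comm, dsp, dp,
        smul_comm, sub_self]
    have hpb : ∀ k, p k * b = 0 := by
      intro k
      have := congrArg star (hbp k)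
      rwa [star_mul, hbs, (hpp k).2, star_zero] at this
    have hbd := rule b hbp
    have hdb := rule' b hpb
    have hbd' : b * star d = 0 := by
      have := congrArg star hdb
      rwa [star_mul, hbs, star_zero] at this
    have : star b * b = 0 := by
      rw [hbs]
      nth_rewrite 2 [hb]
      rw [mul_sub, ← mul_assoc, ← mul_assoc, hbd, hbd', zero_mul, zero_mul, sub_zero]
    exact sub_eq_zero.1 ((CStarRing.star_mul_self_eq_zero_iff _).1 this)
  have hnc : ∀ c : ℂ, IsStarNormal (d - c • (1 : H →L[ℂ] H)) := by
    intro c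
    refine ⟨?_⟩
    change star (d - c • (1 : H →L[ℂ] H)) * (d - c • 1) = (d - c • 1) * star (d - c • 1)
    simp only [star_sub, star_smul, star_one, sub_mul, mul_sub, hn, smul_mul_assoc, mul_smul_comm,
      one_mul, mul_one]
    rw [smul_sub, smul_sub, smul_comm c (star c)]
    abel
  let K : ℂ → Submodule ℂ H := fun c => (d - c • (1 : H →L[ℂ] H)).ker
  have hKc : ∀ c, IsClosed (K c : Set H) := fun c => (d - c • (1 : H →L[ℂ] H)).isClosed_ker
  have : ∀ c, CompleteSpace (K c) := fun c => (hKc c).completeSpace_coe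
  let E : ℂ → H →L[ℂ] H := fun c => (K c).starProjection
  have hEp : ∀ c, IsProjection (E c) := fun c => isProjection_starProjection (K c)
  have absorbE : ∀ c (b : H →L[ℂ] H), (d - c • (1 : H →L[ℂ] H)) * b = 0 → E c * b = b := by
    intro c b hb
    ext ξ
    refine Submodule.starProjection_eq_self_iff.2 ?_
    exact congrArg (fun t : H →L[ℂ] H => t ξ) hb
  have kerE : ∀ c, (d - c • (1 : H →L[ℂ] H)) * E c = 0 := by
    intro c
    ext ξ
    exact Submodule.starProjection_apply_mem (K c) ξ
  have hflip : ∀ (c : ℂ) (b : H →L[ℂ] H), (d - c • (1 : H →L[ℂ] H)) * b = 0 ↔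
      star (d - c • (1 : H →L[ℂ] H)) * b = 0 := by
    intro c b
    constructor
    · intro h
      ext ξ
      exact ((hnc c).adjoint_apply_eq_zero_iff (b ξ)).2 (congrArg (fun t : H →L[ℂ] H => t ξ) h)
    · intro h
      ext ξ
      exact ((hnc c).adjoint_apply_eq_zero_iff (b ξ)).1 (congrArg (fun t : H →L[ℂ] H => t ξ) h)
  refine ⟨E, hEp, ?_, ?_, ?_⟩
  · intro c
    have := kerE c
    rw [sub_mul, smul_mul_assoc, one_mul] at this
    exact sub_eq_zero.1 this
  · intro c
    have := congrArg star ((hflip c _).1 (kerE c))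
    rw [star_mul, star_star, (hEp c).2, mul_sub, mul_smul_comm, mul_one, star_zero] at this
    exact sub_eq_zero.1 this
  · intro b hb
    have h1 : ∀ k, b * p k = 0 := by
      intro k
      have : E (lam k) * p k = p k := by
        apply absorbE
        rw [sub_mul, dp, smul_mul_assoc, one_mul, sub_self]
      rw [← this, ← mul_assoc, hb, zero_mul]
    have h2 := congrArg star (rule b h1)
    rw [star_mul, star_zero] at h2
    have h3 : E 0 * star b = star b := by
      apply absorbE
      rw [hflip]
      simpa using h2
    have h4 := congrArg star h3
    rw [star_mul, star_star, (hEp 0).2, hb] at h4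
    exact h4.symm

lemma spectral_comm {d : H →L[ℂ] H} {E : ℂ → H →L[ℂ] H} (hp : ∀ c, IsProjection (E c))
    (h1 : ∀ c, d * E c = c • E c) (h2 : ∀ c, E c * d = c • E c)
    (h3 : ∀ b : H →L[ℂ] H, (∀ c, b * E c = 0) → b = 0) :
    (∀ y : H →L[ℂ] H, y * d = d * y → ∀ c, y * E c = E c * y) ∧
      ∀ c c', c ≠ c' → E c * E c' = 0 := by
  have h3' : ∀ b : H →L[ℂ] H, (∀ c, E c * b = 0) → b = 0 := by
    intro b hb
    have : star b = 0 := by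
      apply h3
      intro c
      have := congrArg star (hb c)
      rwa [star_mul, (hp c).2, star_zero] at this
    simpa using this
  have key : ∀ y : H →L[ℂ] H, y * d = d * y → ∀ c c', c ≠ c' → E c * y * E c' = 0 := by
    intro y hy c c' hne
    have e1 : E c * d * y * E c' = c • (E c * y * E c') := by
      rw [h2, smul_mul_assoc, smul_mul_assoc]
    have e2 : E c * d * y * E c' = c' • (E c * y * E c') := by
      rw [mul_assoc (E c), ← hy, mul_assoc, mul_assoc, h1, mul_smul_comm, mul_smul_comm, mul_assoc]
    have : (c - c') • (E c * y * E c') = 0 := by rw [sub_smul, ← e1, ← e2, sub_self]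
    exact (smul_eq_zero.1 this).resolve_left (sub_ne_zero.2 hne)
  have orth : ∀ c c', c ≠ c' → E c * E c' = 0 := by
    intro c c' hne
    have := key 1 (by simp) c c' hne
    rwa [mul_one] at this
  refine ⟨?_, orth⟩
  intro y hy c
  have a1 : y * E c - E c * y * E c = 0 := by
    apply h3'
    intro c'
    by_cases h : c' = c
    · subst h
      rw [mul_sub, ← mul_assoc, ← mul_assoc, ← mul_assoc, (hp c').1, sub_self]
    · rw [mul_sub, ← mul_assoc, ← mul_assoc, ← mul_assoc, key y hy c' c h, orth c' c h]
      simp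
  have a2 : E c * y - E c * y * E c = 0 := by
    apply h3
    intro c'
    by_cases h : c' = c
    · subst h
      rw [sub_mul, mul_assoc (E c' * y), (hp c').1, sub_self]
    · rw [sub_mul, mul_assoc (E c * y), key y hy c c' (Ne.symm h), orth c c' (Ne.symm h)]
      simp
  exact (sub_eq_zero.1 a1).trans (sub_eq_zero.1 a2).symm

lemma joint_spectral {M : VonNeumannAlgebra H} : ∀ (n : ℕ) (β : Fin n → (H →L[ℂ] H)),
    (∀ j, IsDiagonal M (β j)) → (∀ i j, β i * β j = β j * β i) →
    ∃ (ι : Type) (P : ι → H →L[ℂ] H) (c : ι → Fin n → ℂ),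
      (∀ i, IsProjection (P i)) ∧ (∀ i i', i ≠ i' → P i * P i' = 0) ∧
      (∀ y : H →L[ℂ] H, (∀ j, y * β j = β j * y) → ∀ i, y * P i = P i * y) ∧
      (∀ i j, β j * P i = c i j • P i) ∧
      (∀ b : H →L[ℂ] H, (∀ i, b * P i = 0) → b = 0) := by
  intro n
  induction n with
  | zero =>
    intro β _ _
    refine ⟨Unit, fun _ => 1, fun _ _ => 0, fun _ => ⟨by simp, by simp⟩, ?_, ?_, ?_, ?_⟩
    · intro i i' h; exact absurd rfl h
    · intro y _ _; simp
    · intro i j; exact j.elim0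
    · intro b hb; simpa using hb ()
  | succ n ih =>
    intro β hd hc
    obtain ⟨ι, P, c, hP, hPo, hPc, hPe, hPd⟩ := ih (fun j => β j.castSucc) (fun j => hd _)
      (fun i j => hc _ _)
    obtain ⟨E, hE, hE1, hE2, hE3⟩ := diag_spectral (hd (Fin.last n))
    obtain ⟨hEc, hEo⟩ := spectral_comm hE hE1 hE2 hE3
    have hEP : ∀ l i, E l * P i = P i * E l := by
      intro l i
      apply hPc
      intro j
      exact (hEc _ (hc _ _) l).symm
    refine ⟨ι × ℂ, fun x => P x.1 * E x.2, fun x => Fin.snoc (c x.1) x.2, ?_, ?_, ?_, ?_, ?_⟩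
    · intro x
      exact (hP _).mul (hE _) (hEP _ _).symm
    · rintro ⟨i, l⟩ ⟨i', l'⟩ hne
      have e : P i * E l * (P i' * E l') = P i * P i' * (E l * E l') := by
        rw [mul_assoc, ← mul_assoc (E l), hEP]; simp only [mul_assoc]
      change P i * E l * (P i' * E l') = 0
      rw [e]
      by_cases h : i = i'
      · have : l ≠ l' := fun h' => hne (by rw [h, h'])
        rw [hEo _ _ this, mul_zero]
      · rw [hPo _ _ h, zero_mul]
    · intro y hy x
      rw [← mul_assoc, hPc y (fun j => hy _), mul_assoc, hEc y (hy _), mul_assoc]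
    · rintro ⟨i, l⟩ j
      change β j * (P i * E l) = _ • (P i * E l)
      refine Fin.lastCases ?_ (fun j => ?_) j
      · rw [← hEP, ← mul_assoc, hE1, smul_mul_assoc]; simp
      · rw [← mul_assoc, hPe, smul_mul_assoc]; simp
    · intro b hb
      apply hPd
      intro i
      apply hE3
      intro l
      rw [mul_assoc]
      exact hb (i, l)

lemma main {M : VonNeumannAlgebra H} {τ : (H →L[ℂ] H) → ENNReal} (hτ : IsFNSTrace M τ)
    (n : ℕ) (β : Fin n → (H →L[ℂ] H))
    (hβmem : ∀ j, β j ∈ M) (hβdiag : ∀ j, IsDiagonal M (β j))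
    (hβcomm : ∀ i j, β i * β j = β j * β i)
    (htriv : ∀ x ∈ WZstar M (Set.range β), IsFiniteProjection M x → x = 0)
    (r : H →L[ℂ] H) (hr : IsTauFiniteProjection M τ r) :
    ∃ v, v ∈ M ∧ star v * v = 1 ∧
      (1 - r) * (v * star v) = v * star v ∧
      ∀ j, star v * β j * v = β j := by
  obtain ⟨ι, P, c, hP, hPo, hPc, hPe, hPd⟩ := joint_spectral n β hβdiag hβcomm
  obtain ⟨hrM, hrp, hrt⟩ := hr
  have hPM : ∀ i, P i ∈ M := by
    intro i
    apply mem_of_comm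
    intro y hy
    exact hPc y (fun j => (hy _ (hβmem j)).symm) i
  have hinf : ∀ i z, IsCentralProjection M z → τ (z * P i) < ⊤ → z * P i = 0 := by
    intro i z hz hlt
    apply htriv
    · intro y hy
      have h1 : z * y = y * z := hy z (Or.inr hz.2)
      have h2 : y * P i = P i * y := hPc y (fun j => (hy (β j) (Or.inl ⟨j, rfl⟩)).symm) i
      rw [mul_assoc, ← h2, ← mul_assoc, ← mul_assoc, h1]
    · exact finite_of_tau hτ (mul_mem hz.2.1 (hPM i)) (hz.1.mul (hP i) (hz.2.2 _ (hPM i))) hlt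
  have hex : ∀ i, ∃ u ∈ M, star u * u = P i ∧ P i * u = u ∧ r * u = 0 := by
    intro i
    obtain ⟨w, hwM, hwp, haw, hwl, hwr⟩ := polar M (r * P i) (mul_mem hrM (hPM i))
    have hrw : r * w = w := by
      have : (1 - r) * w = 0 := by
        apply hwl
        rw [← mul_assoc, sub_mul, one_mul, hrp.1, sub_self, zero_mul]
      rw [sub_mul, one_mul] at this
      exact (sub_eq_zero.1 this).symm
    have hwP : w * P i = w := by
      have : w * (1 - P i) = 0 := by
        apply hwr
        rw [mul_assoc, mul_sub, mul_one, (hP i).1, sub_self, mul_zero]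
      rw [mul_sub, mul_one] at this
      exact (sub_eq_zero.1 this).symm
    have hPw : P i * star w = star w := by
      have := congrArg star hwP
      simpa [(hP i).2] using this
    have hPf : P i * (star w * w) = star w * w := by rw [← mul_assoc, hPw]
    have hft : τ (star w * w) < ⊤ := by
      rw [hτ.tracial w hwM]
      refine lt_of_le_of_lt (tau_mono hτ hrM (mul_mem hwM (star_mem hwM)) hrp
        (pi_proj (pi_of_proj hwp)).2 ?_) hrt
      rw [← mul_assoc, hrw]
    obtain ⟨u, huM, hu1, hu2, hu3⟩ := absorb hτ (hPM i) (hP i) (hinf i)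
      (mul_mem (star_mem hwM) hwM) hwp hPf hft
    refine ⟨u, huM, hu1, hu2, ?_⟩
    calc r * u = r * P i * u := by rw [mul_assoc, hu2]
      _ = r * P i * (star w * w) * u := by rw [haw]
      _ = 0 := by rw [mul_assoc, hu3, mul_zero]
  choose u huM hu1 hu2 hu3 using hex
  have hpi : ∀ i, u i * star (u i) * u i = u i := fun i =>
    pi_of_proj (by rw [hu1]; exact hP i)
  have huP : ∀ i, u i * P i = u i := by
    intro i
    rw [← hu1, ← mul_assoc, hpi]
  have hPu' : ∀ i, P i * star (u i) = star (u i) := by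
    intro i
    have := congrArg star (huP i)
    simpa [(hP i).2] using this
  have huP' : ∀ i, star (u i) * P i = star (u i) := by
    intro i
    have := congrArg star (hu2 i)
    simpa [(hP i).2] using this
  obtain ⟨s, hsM, hsp, hl, hrr, hs1, hs2⟩ := sum_pi M u huM hpi
    (fun i j hij => by
      rw [← huP' i, ← hu2 j, mul_assoc, ← mul_assoc (P i), hPo i j hij]; simp)
    (fun i j hij => by
      rw [← huP i, ← hPu' j, mul_assoc, ← mul_assoc (P i), hPo i j hij]; simp)
  have hsP : ∀ i, s * P i = u i := by
    intro i
    have := hs1 i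
    rwa [hu1] at this
  have hss : star s * s = 1 := by
    have : star s * s - 1 = 0 := by
      apply hPd
      intro i
      rw [sub_mul, one_mul, mul_assoc, hsP, hs2, hu1, sub_self]
    exact sub_eq_zero.1 this
  have hrs : r * s = 0 := hl _ hu3
  refine ⟨s, hsM, hss, ?_, ?_⟩
  · rw [← mul_assoc, sub_mul, one_mul, hrs, sub_zero]
  · intro j
    have : β j * s - s * β j = 0 := by
      apply hPd
      intro i
      rw [sub_mul, mul_assoc, mul_assoc, hPe, hsP, mul_smul_comm, hsP, ← hu2, ← mul_assoc, hPe,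
        smul_mul_assoc, sub_self]
    rw [mul_assoc, sub_eq_zero.1 this, ← mul_assoc, hss, one_mul]

end VNA

open VNA in
/-- For a diagonal tuple `β` with `WZ*(β)` containing no nonzero finite
projection and a τ-finite projection `r`, there is an isometry `v` with `v v* ≤ 1 - r`
commuting appropriately: `v* β(j) v = β(j)`. -/
theorem statement_16 {H : Type*} [NormedAddCommGroup H] [InnerProductSpace ℂ H]
    [CompleteSpace H] (M : VonNeumannAlgebra H)
    (hM : ProperlyInfinite M) (hσ : SigmaFinite M)
    (τ : (H →L[ℂ] H) → ENNReal) (hτ : IsFNSTrace M τ)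
    (n : ℕ) (hn : 0 < n) (β : Fin n → (H →L[ℂ] H))
    (hβmem : ∀ j, β j ∈ M) (hβdiag : ∀ j, IsDiagonal M (β j))
    (hβcomm : ∀ i j, β i * β j = β j * β i)
    (htriv : ∀ x ∈ WZstar M (Set.range β), IsFiniteProjection M x → x = 0)
    (r : H →L[ℂ] H) (hr : IsTauFiniteProjection M τ r) :
    ∃ v, v ∈ M ∧ star v * v = 1 ∧
      (1 - r) * (v * star v) = v * star v ∧
      ∀ j, star v * β j * v = β j := by
  exact VNA.main hτ n β hβmem hβdiag hβcomm htriv r hr
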